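/- arXiv:1611.03953 — 3 statements merged into one kernel-verified Lean document; each statement's English description precedes it below -/
import Mathlib

section
/- Let k be a field of characteristic different from 2 and let α, α' ∈ k with α, α' ∉ {0, 1, −1} and α ≠ α'. With S_β = [[0,1],[β,0]] and T_β = [[1,−β⁻¹],[1,−1]] for β ∈ {α, α'}: for every M ∈ {S_α, T_α, S_α·T_α}, every N ∈ {S_{α'}, T_{α'}, S_{α'}·T_{α'}}, and every c ∈ k, one has M ≠ c·N. Consequently the Klein four-subgroups of PGL₂(k) generated by the images of {S_α, T_α} and of {S_{α'}, T_{α'}} intersect trivially. -/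
/-!
The relations `S_β² = β`, `T_β² = 1 - β⁻¹` and `T_β S_β = -S_β T_β` show that the subgroup of
`PGL₂(k)` generated by `S_β` and `T_β` consists of the classes of `1`, `S_β`, `T_β` and `S_β T_β`.
For a matrix `M` both the ratio `M₁₀ / M₀₁` and the vanishing of `M₀₀` are unchanged by nonzero
scalars. The ratio is `β` for `S_β`, where `M₀₀ = 0`, and `-β` for `T_β` and `S_β T_β`, where
`M₀₀ = 1`. Hence each of the three nontrivial classes determines `β`.
-/

open Matrix
open scoped MatrixGroups

theorem mem_closure_pair_iff_of_mul_self_eq_one {G : Type*} [Group G] {a b : G}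
    (ha : a * a = 1) (hb : b * b = 1) (hab : Commute a b) {x : G} :
    x ∈ Subgroup.closure {a, b} ↔ x = 1 ∨ x = a ∨ x = b ∨ x = a * b := by
  have ha_mem : a ∈ Subgroup.closure {a, b} := Subgroup.subset_closure (by simp)
  have hb_mem : b ∈ Subgroup.closure {a, b} := Subgroup.subset_closure (by simp)
  constructor
  · intro hx
    have mul_left (g : G) (hg : g ∈ ({a, b} : Set G)) (y : G)
        (hy : y = 1 ∨ y = a ∨ y = b ∨ y = a * b) :
        g * y = 1 ∨ g * y = a ∨ g * y = b ∨ g * y = a * b := by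
      have haab : a * (a * b) = b := by rw [← mul_assoc, ha, one_mul]
      have hbab : b * (a * b) = a := by rw [hab.eq, ← mul_assoc, hb, one_mul]
      rcases hg with rfl | rfl <;> rcases hy with rfl | rfl | rfl | rfl <;>
        simp [ha, hb, hab.symm.eq, haab, hbab]
    have inv_eq (g : G) (hg : g ∈ ({a, b} : Set G)) : g⁻¹ = g := by
      rcases hg with rfl | rfl
      · exact inv_eq_of_mul_eq_one_left ha
      · exact inv_eq_of_mul_eq_one_left hb
    induction hx using Subgroup.closure_induction_left with
    | one => exact .inl rfl
    | mul_left g hg y _ hy => exact mul_left g hg y hy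
    | inv_mul_cancel g hg y _ hy => exact (inv_eq g hg).symm ▸ mul_left g hg y hy
  · rintro (rfl | rfl | rfl | rfl)
    exacts [one_mem _, ha_mem, hb_mem, mul_mem ha_mem hb_mem]

theorem projGenLinGroup_mk_eq_mk_iff_exists_smul {n R : Type*} [Fintype n] [DecidableEq n]
    [CommRing R] {g h : GL n R} :
    ProjGenLinGroup.mk g = ProjGenLinGroup.mk h ↔
      ∃ c : R, (g : Matrix n n R) = c • (h : Matrix n n R) := by
  have hcoset : ProjGenLinGroup.mk g = ProjGenLinGroup.mk h ↔
      g * h⁻¹ ∈ Subgroup.center (GL n R) := by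
    rw [← ProjGenLinGroup.mk_eq_one, map_mul, map_inv, mul_inv_eq_one]
  rw [hcoset, GeneralLinearGroup.mem_center_iff_val_mem_range_scalar]
  refine exists_congr fun c => ?_
  rw [Units.val_mul, Units.eq_mul_inv_iff_mul_eq, scalar_apply, ← smul_eq_diagonal_mul, eq_comm]

section KleinMatrices

variable {k : Type*} [Field k] {β : k} {M N : Matrix (Fin 2) (Fin 2) k} {s t : GL (Fin 2) k}

/-- The matrix `S_β` of the automorphism `σ_β` of `ℙ¹`. -/
def sigmaMatrix (β : k) : Matrix (Fin 2) (Fin 2) k := !![0, 1; β, 0]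

/-- The matrix `T_β` of the automorphism `τ_β` of `ℙ¹`. -/
def tauMatrix (β : k) : Matrix (Fin 2) (Fin 2) k := !![1, -β⁻¹; 1, -1]

/-- Representatives in `Matrix (Fin 2) (Fin 2) k` of the nontrivial elements of the Klein
four-group `⟨σ_β, τ_β⟩`. -/
def kleinMatrices (β : k) : Set (Matrix (Fin 2) (Fin 2) k) :=
  {sigmaMatrix β, tauMatrix β, sigmaMatrix β * tauMatrix β}

theorem sigmaMatrix_mul_self (β : k) : sigmaMatrix β * sigmaMatrix β = β • 1 := by
  simp [sigmaMatrix, one_fin_two]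

theorem tauMatrix_mul_self (β : k) : tauMatrix β * tauMatrix β = (1 - β⁻¹) • 1 := by
  simp [tauMatrix, one_fin_two, sub_eq_add_neg, add_comm]

theorem sigmaMatrix_mul_tauMatrix (β : k) :
    sigmaMatrix β * tauMatrix β = !![1, -1; β, -(β * β⁻¹)] := by
  simp [sigmaMatrix, tauMatrix]

theorem tauMatrix_mul_sigmaMatrix (hβ : β ≠ 0) :
    tauMatrix β * sigmaMatrix β = -(sigmaMatrix β * tauMatrix β) := by
  simp [sigmaMatrix, tauMatrix, hβ]

theorem eq_one_or_exists_mk_eq_of_mem_closure (hβ : β ≠ 0)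
    (hs : (s : Matrix (Fin 2) (Fin 2) k) = sigmaMatrix β)
    (ht : (t : Matrix (Fin 2) (Fin 2) k) = tauMatrix β) {x : PGL(2, k)}
    (hx : x ∈ Subgroup.closure {ProjGenLinGroup.mk s, ProjGenLinGroup.mk t}) :
    x = 1 ∨ ∃ g : GL (Fin 2) k, ↑g ∈ kleinMatrices β ∧ ProjGenLinGroup.mk g = x := by
  have hss : ProjGenLinGroup.mk s * ProjGenLinGroup.mk s = 1 := by
    rw [← map_mul, ← ProjGenLinGroup.mk_one, projGenLinGroup_mk_eq_mk_iff_exists_smul]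
    exact ⟨β, by rw [Units.val_mul, hs, sigmaMatrix_mul_self, Units.val_one]⟩
  have htt : ProjGenLinGroup.mk t * ProjGenLinGroup.mk t = 1 := by
    rw [← map_mul, ← ProjGenLinGroup.mk_one, projGenLinGroup_mk_eq_mk_iff_exists_smul]
    exact ⟨1 - β⁻¹, by rw [Units.val_mul, ht, tauMatrix_mul_self, Units.val_one]⟩
  have hst : Commute (ProjGenLinGroup.mk s) (ProjGenLinGroup.mk t) := by
    refine Commute.symm ?_
    rw [commute_iff_eq, ← map_mul, ← map_mul, projGenLinGroup_mk_eq_mk_iff_exists_smul]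
    refine ⟨-1, ?_⟩
    rw [Units.val_mul, Units.val_mul, hs, ht, tauMatrix_mul_sigmaMatrix hβ, neg_one_smul]
  rcases (mem_closure_pair_iff_of_mul_self_eq_one hss htt hst).1 hx with rfl | rfl | rfl | rfl
  · exact .inl rfl
  · exact .inr ⟨s, by simp [kleinMatrices, hs], rfl⟩
  · exact .inr ⟨t, by simp [kleinMatrices, ht], rfl⟩
  · exact .inr ⟨s * t, by simp [kleinMatrices, hs, ht], map_mul _ _ _⟩

/-- A function of `M` invariant under nonzero scalars, which recovers `β` from each element of
`kleinMatrices β`. -/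
def kleinParameter [DecidableEq k] (M : Matrix (Fin 2) (Fin 2) k) : k :=
  if M 0 0 = 0 then M 1 0 / M 0 1 else -(M 1 0 / M 0 1)

theorem kleinParameter_smul [DecidableEq k] {c : k} (hc : c ≠ 0)
    (M : Matrix (Fin 2) (Fin 2) k) :
    kleinParameter (c • M) = kleinParameter M := by
  have hzero : (c • M) 0 0 = 0 ↔ M 0 0 = 0 := by simp [hc]
  have hratio : (c • M) 1 0 / (c • M) 0 1 = M 1 0 / M 0 1 := mul_div_mul_left _ _ hc
  simp only [kleinParameter, hzero, hratio]

theorem kleinParameter_of_mem_kleinMatrices [DecidableEq k] (hM : M ∈ kleinMatrices β) :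
    kleinParameter M = β := by
  rcases hM with rfl | rfl | rfl
  · simp [kleinParameter, sigmaMatrix]
  · simp [kleinParameter, tauMatrix]
  · simp [kleinParameter, sigmaMatrix_mul_tauMatrix, div_neg]

theorem ne_zero_of_mem_kleinMatrices (hM : M ∈ kleinMatrices β) : M ≠ 0 := by
  rcases hM with rfl | rfl | rfl
  · exact fun h => by simpa [sigmaMatrix] using congr_fun₂ h 0 1
  · exact fun h => by simpa [tauMatrix] using congr_fun₂ h 0 0
  · exact fun h => by simpa [sigmaMatrix_mul_tauMatrix] using congr_fun₂ h 0 0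

theorem eq_of_mem_kleinMatrices_of_eq_smul {α α' c : k} (hM : M ∈ kleinMatrices α)
    (hN : N ∈ kleinMatrices α') (h : M = c • N) : α = α' := by
  classical
  have hc : c ≠ 0 := by
    rintro rfl
    exact ne_zero_of_mem_kleinMatrices hM (h.trans (zero_smul k N))
  calc
    α = kleinParameter (c • N) := by rw [← h, kleinParameter_of_mem_kleinMatrices hM]
    _ = α' := by rw [kleinParameter_smul hc, kleinParameter_of_mem_kleinMatrices hN]

end KleinMatrices

theorem klein_four_subgroups_intersect_trivially_general {k : Type*} [Field k] {α α' : k}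
    (h0 : α ≠ 0) (h0' : α' ≠ 0) (hne : α ≠ α') :
    (∀ M ∈ kleinMatrices α, ∀ N ∈ kleinMatrices α', ∀ c : k, M ≠ c • N) ∧
    ∀ u₁ v₁ u₂ v₂ : GL (Fin 2) k,
      (u₁ : Matrix (Fin 2) (Fin 2) k) = sigmaMatrix α →
      (v₁ : Matrix (Fin 2) (Fin 2) k) = tauMatrix α →
      (u₂ : Matrix (Fin 2) (Fin 2) k) = sigmaMatrix α' →
      (v₂ : Matrix (Fin 2) (Fin 2) k) = tauMatrix α' →
      Subgroup.closure {ProjGenLinGroup.mk u₁, ProjGenLinGroup.mk v₁} ⊓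
        Subgroup.closure {ProjGenLinGroup.mk u₂, ProjGenLinGroup.mk v₂} = ⊥ := by
  refine ⟨fun M hM N hN c h => hne (eq_of_mem_kleinMatrices_of_eq_smul hM hN h), ?_⟩
  intro u₁ v₁ u₂ v₂ hu₁ hv₁ hu₂ hv₂
  rw [← disjoint_iff, Subgroup.disjoint_def]
  intro x hx₁ hx₂
  rcases eq_one_or_exists_mk_eq_of_mem_closure h0 hu₁ hv₁ hx₁ with hx | ⟨g, hg, hgx⟩
  · exact hx
  rcases eq_one_or_exists_mk_eq_of_mem_closure h0' hu₂ hv₂ hx₂ with hx | ⟨g', hg', hgx'⟩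
  · exact hx
  obtain ⟨c, hc⟩ := projGenLinGroup_mk_eq_mk_iff_exists_smul.1 (hgx.trans hgx'.symm)
  exact absurd (eq_of_mem_kleinMatrices_of_eq_smul hg hg' hc) hne

/-- For distinct `α, α' ∉ {0,1,-1}`, no element of `{S_α, T_α, S_α T_α}` is a scalar
multiple of an element of `{S_{α'}, T_{α'}, S_{α'} T_{α'}}`; consequently the Klein
four-subgroups of `PGL₂(k)` generated by the images of `{S_α, T_α}` and
`{S_{α'}, T_{α'}}` intersect trivially. -/
theorem klein_four_subgroups_intersect_trivially
    (k : Type*) [Field k] (h2 : (2 : k) ≠ 0)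
    (α α' : k) (h0 : α ≠ 0) (h1 : α ≠ 1) (hm1 : α ≠ -1)
    (h0' : α' ≠ 0) (h1' : α' ≠ 1) (hm1' : α' ≠ -1) (hne : α ≠ α') :
    (∀ M ∈ ({!![0, 1; α, 0], !![1, -α⁻¹; 1, -1],
        !![0, 1; α, 0] * !![1, -α⁻¹; 1, -1]} : Set (Matrix (Fin 2) (Fin 2) k)),
      ∀ N ∈ ({!![0, 1; α', 0], !![1, -α'⁻¹; 1, -1],
        !![0, 1; α', 0] * !![1, -α'⁻¹; 1, -1]} : Set (Matrix (Fin 2) (Fin 2) k)),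
      ∀ c : k, M ≠ c • N) ∧
    ∀ u₁ v₁ u₂ v₂ : GL (Fin 2) k,
      (↑u₁ : Matrix (Fin 2) (Fin 2) k) = !![0, 1; α, 0] →
      (↑v₁ : Matrix (Fin 2) (Fin 2) k) = !![1, -α⁻¹; 1, -1] →
      (↑u₂ : Matrix (Fin 2) (Fin 2) k) = !![0, 1; α', 0] →
      (↑v₂ : Matrix (Fin 2) (Fin 2) k) = !![1, -α'⁻¹; 1, -1] →
      Subgroup.closure
          {(QuotientGroup.mk u₁ : GL (Fin 2) k ⧸ Subgroup.center (GL (Fin 2) k)),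
            QuotientGroup.mk v₁} ⊓
        Subgroup.closure
          {(QuotientGroup.mk u₂ : GL (Fin 2) k ⧸ Subgroup.center (GL (Fin 2) k)),
            QuotientGroup.mk v₂} = ⊥ := by
  exact klein_four_subgroups_intersect_trivially_general h0 h0' hne
end

section
/- Let k be a field of characteristic different from 2 and let α ∈ k with α ∉ {0, 1, −1}. Set A = [[1,−1],[1,1]], S_α = [[0,1],[α,0]], and T_α = [[1,−α⁻¹],[1,−1]] over k. Then for every i ∈ {1,2,3}, every N ∈ {S_α, T_α, S_α·T_α}, and every c ∈ k, one has Aⁱ ≠ c·N; moreover Aⁱ is not a scalar matrix for i ∈ {1,2,3}. Consequently the cyclic group of order 4 generated by the image of A in PGL₂(k) intersects the Klein four-group generated by the images of S_α and T_α trivially. -/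
/-!
Every element of the Klein four-group `⟨S_α, T_α⟩` commutes with `S_α` in `PGL₂(k)`. On the other
hand `Aⁱ` for `i ∈ {1, 2, 3}` has the shape `!![a, -b; b, a]` with `b ≠ 0`, and such a matrix
commutes with `S_α` up to a scalar only if `α ^ 2 = 1`. In the cyclic group of order 4 it is
enough to exclude `A²`, which lies in every nontrivial subgroup.
-/

section ProjCommute

variable {R M : Type*} [CommSemiring R] [Semiring M] [Algebra R M] {a b c : M}

variable (R) in
/-- `ProjCommute R a b` says that `a` and `b` commute up to a scalar of `R`. For invertible
matrices this is commutation in the projective linear group; the scalar need not be a unit, so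
the notion also applies to singular matrices. -/
def ProjCommute (a b : M) : Prop := ∃ r : R, a * b = r • (b * a)

variable (R) in
theorem ProjCommute.of_commute (h : Commute a b) : ProjCommute R a b :=
  ⟨1, by rw [one_smul, h.eq]⟩

theorem ProjCommute.mul_left (ha : ProjCommute R a c) (hb : ProjCommute R b c) :
    ProjCommute R (a * b) c := by
  obtain ⟨r, hr⟩ := ha
  obtain ⟨s, hs⟩ := hb
  refine ⟨s * r, ?_⟩
  calc a * b * c = a * (s • (c * b)) := by rw [mul_assoc, hs]
    _ = s • (a * c * b) := by rw [mul_smul_comm, mul_assoc]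
    _ = (s * r) • (c * (a * b)) := by rw [hr, smul_mul_assoc, smul_smul, mul_assoc]

theorem ProjCommute.smul_left (h : ProjCommute R a b) (r : R) : ProjCommute R (r • a) b := by
  obtain ⟨s, hs⟩ := h
  exact ⟨s, by rw [smul_mul_assoc, hs, mul_smul_comm, smul_comm]⟩

end ProjCommute

section Group

variable {G : Type*} [Group G]

theorem commute_of_mem_closure {S : Set G} {x z : G} (hS : ∀ s ∈ S, Commute s x)
    (hz : z ∈ Subgroup.closure S) : Commute z x := by
  have hle : Subgroup.closure S ≤ Subgroup.centralizer {x} :=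
    (Subgroup.closure_le _).2 fun s hs => Subgroup.mem_centralizer_singleton_iff.2 (hS s hs)
  exact Subgroup.mem_centralizer_singleton_iff.1 (hle hz)

theorem zpow_gcd_mem {K : Subgroup G} {g : G} {m n : ℤ} (hm : g ^ m ∈ K) (hn : g ^ n ∈ K) :
    g ^ Int.gcd m n ∈ K := by
  rw [← zpow_natCast, Int.gcd_eq_gcd_ab, zpow_add, zpow_mul, zpow_mul]
  exact mul_mem (zpow_mem hm _) (zpow_mem hn _)

theorem zpowers_inf_eq_bot_of_pow_prime_pow_notMem {K : Subgroup G} {g : G} {p n : ℕ}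
    (hp : p.Prime) (hg : g ^ p ^ (n + 1) = 1) (hK : g ^ p ^ n ∉ K) :
    Subgroup.zpowers g ⊓ K = ⊥ := by
  rw [Subgroup.eq_bot_iff_forall]
  rintro _ ⟨⟨m, rfl⟩, hm : g ^ m ∈ K⟩
  have hg' : g ^ ((p ^ (n + 1) : ℕ) : ℤ) = 1 := by rw [zpow_natCast, hg]
  have hd : g ^ Int.gcd m (p ^ (n + 1) : ℕ) ∈ K := zpow_gcd_mem hm (hg' ▸ one_mem K)
  obtain ⟨j, hj, hgcd⟩ := (Nat.dvd_prime_pow hp).1 (Int.gcd_dvd_natAbs_right m (p ^ (n + 1) : ℕ))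
  rw [hgcd] at hd
  obtain rfl | hlt := hj.eq_or_lt
  · obtain ⟨t, rfl⟩ : ((p ^ (n + 1) : ℕ) : ℤ) ∣ m := hgcd ▸ Int.gcd_dvd_left m _
    change g ^ (_ * t) = 1
    rw [zpow_mul, hg', one_zpow]
  · obtain ⟨t, ht⟩ := pow_dvd_pow p (Nat.lt_succ_iff.1 hlt)
    exact absurd (by rw [ht, pow_mul]; exact pow_mem hd t) hK

end Group

section ProjectiveLinearGroup

variable {n R : Type*} [Fintype n] [DecidableEq n] [CommRing R]

theorem mk_center_eq_mk_iff_exists_smul {g h : GL n R} :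
    (QuotientGroup.mk g : GL n R ⧸ Subgroup.center (GL n R)) = QuotientGroup.mk h ↔
      ∃ r : R, (g : Matrix n n R) = r • (h : Matrix n n R) := by
  rw [eq_comm, QuotientGroup.eq, Matrix.GeneralLinearGroup.mem_center_iff_val_mem_range_scalar,
    Set.mem_range]
  refine exists_congr fun r => ?_
  rw [Units.val_mul, eq_comm, Units.inv_mul_eq_iff_eq_mul, Matrix.scalar_apply,
    ← Matrix.smul_one_eq_diagonal, mul_smul_comm, mul_one]

theorem commute_mk_center_iff_projCommute {g h : GL n R} :
    Commute (QuotientGroup.mk g : GL n R ⧸ Subgroup.center (GL n R)) (QuotientGroup.mk h) ↔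
      ProjCommute R (g : Matrix n n R) (h : Matrix n n R) := by
  rw [commute_iff_eq, ← QuotientGroup.mk_mul, ← QuotientGroup.mk_mul,
    mk_center_eq_mk_iff_exists_smul, Units.val_mul, Units.val_mul, ProjCommute]

theorem zpowers_mk_center_inf_closure_pair_eq_bot {p m : ℕ} (hp : p.Prime) {u v w : GL n R}
    (hu : ∃ r : R, (u : Matrix n n R) ^ p ^ (m + 1) = r • 1)
    (hwv : ProjCommute R (w : Matrix n n R) (v : Matrix n n R))
    (huv : ¬ ProjCommute R ((u : Matrix n n R) ^ p ^ m) (v : Matrix n n R)) :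
    Subgroup.zpowers (QuotientGroup.mk u : GL n R ⧸ Subgroup.center (GL n R)) ⊓
      Subgroup.closure {QuotientGroup.mk v, QuotientGroup.mk w} = ⊥ := by
  apply zpowers_inf_eq_bot_of_pow_prime_pow_notMem hp
  · rw [← QuotientGroup.mk_pow, ← QuotientGroup.mk_one, mk_center_eq_mk_iff_exists_smul]
    exact hu
  · intro hmem
    have hgen : ∀ s ∈ ({QuotientGroup.mk v, QuotientGroup.mk w} : Set _),
        Commute s (QuotientGroup.mk v : GL n R ⧸ Subgroup.center (GL n R)) := by
      rintro _ (rfl | rfl)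
      exacts [.refl _, commute_mk_center_iff_projCommute.2 hwv]
    have hcomm := commute_of_mem_closure hgen hmem
    rw [← QuotientGroup.mk_pow, commute_mk_center_iff_projCommute] at hcomm
    exact huv hcomm

end ProjectiveLinearGroup

theorem exists_pow_eq_planeConformal {R : Type*} [CommRing R] (h2 : (2 : R) ≠ 0) {i : ℕ}
    (hi : i ∈ ({1, 2, 3} : Set ℕ)) :
    ∃ a b : R, b ≠ 0 ∧ (!![1, -1; 1, 1] : Matrix (Fin 2) (Fin 2) R) ^ i = !![a, -b; b, a] := by
  have : Nontrivial R := nontrivial_of_ne _ _ h2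
  rcases hi with rfl | rfl | rfl
  · exact ⟨1, 1, one_ne_zero, pow_one _⟩
  · exact ⟨0, 2, h2, by norm_num [pow_succ]⟩
  · exact ⟨-2, 2, h2, by norm_num [pow_succ]⟩

theorem pow_four_eq_neg_four_smul_one (R : Type*) [CommRing R] :
    (!![1, -1; 1, 1] : Matrix (Fin 2) (Fin 2) R) ^ 4 = (-4 : R) • 1 := by
  rw [Matrix.one_fin_two]
  norm_num [pow_succ]

theorem not_projCommute_planeConformal_antidiagonal {R : Type*} [CommRing R] [NoZeroDivisors R]
    {α a b : R} (hα : α ^ 2 ≠ 1) (hb : b ≠ 0) :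
    ¬ ProjCommute R !![a, -b; b, a] !![0, 1; α, 0] := by
  rintro ⟨r, hr⟩
  obtain ⟨⟨h00, -⟩, -, h11⟩ : (-(b * α) = r * b ∧ _) ∧ _ ∧ b = -(r * (α * b)) := by
    simpa using hr
  have hprod : b * (α ^ 2 - 1) = 0 := by linear_combination (-α) * h00 - h11
  exact (mul_ne_zero hb (sub_ne_zero.2 hα)) hprod

theorem projCommute_klein_generators {k : Type*} [Field k] {α : k} (h0 : α ≠ 0) :
    ProjCommute k !![1, -α⁻¹; 1, -1] !![0, 1; α, 0] :=
  ⟨-1, by simp [h0]⟩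

/-- For `α ∉ {0,1,-1}` and `A = !![1,-1;1,1]`, `S_α = !![0,1;α,0]`,
`T_α = !![1,-α⁻¹;1,-1]`: no `Aⁱ` (`i ∈ {1,2,3}`) is a scalar multiple of an element of
`{S_α, T_α, S_α T_α}`, and no `Aⁱ` (`i ∈ {1,2,3}`) is scalar; consequently the cyclic
order-4 subgroup of `PGL₂(k)` generated by the image of `A` intersects the Klein
four-group generated by the images of `S_α` and `T_α` trivially. -/
theorem cyclic_four_and_klein_four_intersect_trivially
    (k : Type*) [Field k] (h2 : (2 : k) ≠ 0)
    (α : k) (h0 : α ≠ 0) (h1 : α ≠ 1) (hm1 : α ≠ -1) :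
    (∀ i ∈ ({1, 2, 3} : Set ℕ),
      ∀ N ∈ ({!![0, 1; α, 0], !![1, -α⁻¹; 1, -1],
        !![0, 1; α, 0] * !![1, -α⁻¹; 1, -1]} : Set (Matrix (Fin 2) (Fin 2) k)),
      ∀ c : k, (!![1, -1; 1, 1] : Matrix (Fin 2) (Fin 2) k) ^ i ≠ c • N) ∧
    (∀ i ∈ ({1, 2, 3} : Set ℕ),
      ¬ ∃ c : k, (!![1, -1; 1, 1] : Matrix (Fin 2) (Fin 2) k) ^ i =
        c • (1 : Matrix (Fin 2) (Fin 2) k)) ∧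
    ∀ u v w : GL (Fin 2) k,
      (↑u : Matrix (Fin 2) (Fin 2) k) = !![1, -1; 1, 1] →
      (↑v : Matrix (Fin 2) (Fin 2) k) = !![0, 1; α, 0] →
      (↑w : Matrix (Fin 2) (Fin 2) k) = !![1, -α⁻¹; 1, -1] →
      Subgroup.zpowers (QuotientGroup.mk u :
          GL (Fin 2) k ⧸ Subgroup.center (GL (Fin 2) k)) ⊓
        Subgroup.closure
          {(QuotientGroup.mk v : GL (Fin 2) k ⧸ Subgroup.center (GL (Fin 2) k)),
            QuotientGroup.mk w} = ⊥ := by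
  have hα : α ^ 2 ≠ 1 := sq_ne_one_iff.2 ⟨h1, hm1⟩
  have hA : ∀ i ∈ ({1, 2, 3} : Set ℕ),
      ¬ ProjCommute k ((!![1, -1; 1, 1] : Matrix (Fin 2) (Fin 2) k) ^ i) !![0, 1; α, 0] := by
    intro i hi
    obtain ⟨a, b, hb, hab⟩ := exists_pow_eq_planeConformal h2 hi
    exact hab ▸ not_projCommute_planeConformal_antidiagonal hα hb
  have hS : ProjCommute k !![0, 1; α, 0] !![0, 1; α, 0] := .of_commute k (.refl _)
  have hT := projCommute_klein_generators h0
  refine ⟨fun i hi N hN c h => hA i hi ?_, fun i hi ⟨c, h⟩ => hA i hi ?_,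
    fun u v w hu hv hw => zpowers_mk_center_inf_closure_pair_eq_bot (m := 1) Nat.prime_two ?_ ?_ ?_⟩
  · rw [h]
    rcases hN with rfl | rfl | rfl
    exacts [hS.smul_left c, hT.smul_left c, (hS.mul_left hT).smul_left c]
  · exact h ▸ (ProjCommute.of_commute k (.one_left _)).smul_left c
  · rw [hu]
    exact ⟨-4, pow_four_eq_neg_four_smul_one k⟩
  · rwa [hw, hv]
  · rw [hu, hv]
    exact hA 2 (by simp)
end

section
/- Let k be a field of characteristic different from 2 and let α ∈ k satisfy α² + α − 1 = 0. Let D = [[0,1],[α−1,1]] over k. Then there exists a nonzero c ∈ k with D⁵ = c·I, while D is not a scalar matrix; consequently the image of D in PGL₂(k) has order exactly 5. -/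
/-!
Since `α (α + 1) = 1`, the golden-ratio factorization of the tenth cyclotomic polynomial, rescaled
by `α`, reads `X⁵ + α⁵ = (X + α) (X² + α² X + α²) (X² - X + α²)`. The last factor is the
characteristic polynomial of `D`, whose trace is `1` and whose determinant is `1 - α = α²`, so
`D⁵ = -α⁵` by Cayley–Hamilton.
-/

open Matrix Polynomial

section ScalarPowers

variable {n R : Type*} [Fintype n] [DecidableEq n] [CommRing R]

theorem pow_eq_smul_one_of_charpoly_dvd {M : Matrix n n R} {m : ℕ} {c : R}
    (h : M.charpoly ∣ X ^ m - C c) : M ^ m = c • (1 : Matrix n n R) := by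
  have haeval : aeval M (X ^ m - C c) = 0 :=
    aeval_eq_zero_of_dvd_aeval_eq_zero h M.aeval_self_charpoly
  simpa [sub_eq_zero, Algebra.algebraMap_eq_smul_one] using haeval

theorem mk_center_eq_one_iff_exists_eq_smul_one {g : GL n R} :
    (QuotientGroup.mk g : GL n R ⧸ Subgroup.center (GL n R)) = 1 ↔
      ∃ c : R, (g : Matrix n n R) = c • (1 : Matrix n n R) := by
  rw [QuotientGroup.eq_one_iff, GeneralLinearGroup.mem_center_iff_val_mem_range_scalar]
  simp only [Set.mem_range, scalar_apply, smul_one_eq_diagonal, eq_comm]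

theorem orderOf_mk_center_eq_prime {p : ℕ} [Fact p.Prime] {g : GL n R}
    (hpow : ∃ c : R, (g : Matrix n n R) ^ p = c • (1 : Matrix n n R))
    (hg : ¬ ∃ c : R, (g : Matrix n n R) = c • (1 : Matrix n n R)) :
    orderOf (QuotientGroup.mk g : GL n R ⧸ Subgroup.center (GL n R)) = p := by
  apply orderOf_eq_prime
  · rwa [← QuotientGroup.mk_pow, mk_center_eq_one_iff_exists_eq_smul_one,
      Units.val_pow_eq_pow_val]
  · rwa [Ne, mk_center_eq_one_iff_exists_eq_smul_one]

end ScalarPowers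

section GoldenRatio

variable {R : Type*} [CommRing R] {α : R}

theorem pow_five_add_pow_five_eq_mul (hα : α ^ 2 + α - 1 = 0) (x : R) :
    x ^ 5 + α ^ 5 = (x + α) * (x ^ 2 + α ^ 2 * x + α ^ 2) * (x ^ 2 - x + α ^ 2) := by
  linear_combination -x * (x ^ 3 + α * x ^ 2 + α ^ 2 * x + α ^ 3) * hα

theorem X_sq_sub_X_add_C_sq_dvd_X_pow_five_sub_C (hα : α ^ 2 + α - 1 = 0) :
    X ^ 2 - X + C (α ^ 2) ∣ X ^ 5 - C (-α ^ 5) := by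
  have hC : C α ^ 2 + C α - 1 = 0 := by
    simpa only [map_sub, map_add, map_pow, map_one, map_zero] using congrArg C hα
  rw [C_neg, sub_neg_eq_add, C_pow, C_pow, pow_five_add_pow_five_eq_mul hC]
  exact dvd_mul_left _ _

theorem pow_five_eq_smul_one_of_trace_eq_one_of_det_eq_sq (hα : α ^ 2 + α - 1 = 0)
    {M : Matrix (Fin 2) (Fin 2) R} (htrace : M.trace = 1) (hdet : M.det = α ^ 2) :
    M ^ 5 = (-α ^ 5) • (1 : Matrix (Fin 2) (Fin 2) R) := by
  nontriviality R
  apply pow_eq_smul_one_of_charpoly_dvd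
  rw [charpoly_fin_two, htrace, hdet, C_1, one_mul]
  exact X_sq_sub_X_add_C_sq_dvd_X_pow_five_sub_C hα

end GoldenRatio

theorem matrix_D_order_five_in_PGL_general
    {R : Type*} [CommRing R] [Nontrivial R] {α : R} (hα : α ^ 2 + α - 1 = 0) :
    (∃ c : R, IsUnit c ∧
      (!![0, 1; α - 1, 1] : Matrix (Fin 2) (Fin 2) R) ^ 5 =
        c • (1 : Matrix (Fin 2) (Fin 2) R)) ∧
    (¬ ∃ c : R, (!![0, 1; α - 1, 1] : Matrix (Fin 2) (Fin 2) R) =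
        c • (1 : Matrix (Fin 2) (Fin 2) R)) ∧
    ∀ u : GL (Fin 2) R, (↑u : Matrix (Fin 2) (Fin 2) R) = !![0, 1; α - 1, 1] →
      orderOf (QuotientGroup.mk u :
        GL (Fin 2) R ⧸ Subgroup.center (GL (Fin 2) R)) = 5 := by
  have hunit : IsUnit α := .of_mul_eq_one (α + 1) (by linear_combination hα)
  have htrace : (!![0, 1; α - 1, 1] : Matrix (Fin 2) (Fin 2) R).trace = 1 := by
    rw [trace_fin_two_of, zero_add]
  have hdet : (!![0, 1; α - 1, 1] : Matrix (Fin 2) (Fin 2) R).det = α ^ 2 := by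
    rw [det_fin_two_of]
    linear_combination -hα
  have hpow := pow_five_eq_smul_one_of_trace_eq_one_of_det_eq_sq hα htrace hdet
  have hnonscalar : ¬ ∃ c : R, (!![0, 1; α - 1, 1] : Matrix (Fin 2) (Fin 2) R) =
      c • (1 : Matrix (Fin 2) (Fin 2) R) := by
    rintro ⟨c, hc⟩
    simpa using congr($hc 0 1)
  have : Fact (Nat.Prime 5) := ⟨Nat.prime_five⟩
  exact ⟨⟨-α ^ 5, (hunit.pow 5).neg, hpow⟩, hnonscalar, fun u hu ↦
    orderOf_mk_center_eq_prime (hu ▸ ⟨_, hpow⟩) (hu ▸ hnonscalar)⟩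

/-- For `α` with `α² + α - 1 = 0` in a field of characteristic ≠ 2, the matrix
`D = !![0,1;α-1,1]` satisfies `D⁵ = c • 1` for some nonzero scalar `c`, while `D`
itself is not scalar; consequently the image of `D` in `PGL₂(k)` has order
exactly `5`. -/
theorem matrix_D_order_five_in_PGL
    (k : Type*) [Field k] (h2 : (2 : k) ≠ 0)
    (α : k) (hα : α ^ 2 + α - 1 = 0) :
    (∃ c : k, c ≠ 0 ∧
      (!![0, 1; α - 1, 1] : Matrix (Fin 2) (Fin 2) k) ^ 5 =
        c • (1 : Matrix (Fin 2) (Fin 2) k)) ∧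
    (¬ ∃ c : k, (!![0, 1; α - 1, 1] : Matrix (Fin 2) (Fin 2) k) =
        c • (1 : Matrix (Fin 2) (Fin 2) k)) ∧
    ∀ u : GL (Fin 2) k, (↑u : Matrix (Fin 2) (Fin 2) k) = !![0, 1; α - 1, 1] →
      orderOf (QuotientGroup.mk u :
        GL (Fin 2) k ⧸ Subgroup.center (GL (Fin 2) k)) = 5 := by
  obtain ⟨⟨c, hc, hpow⟩, hrest⟩ := matrix_D_order_five_in_PGL_general hα
  exact ⟨⟨c, hc.ne_zero, hpow⟩, hrest⟩
end
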